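/- Assume the feature vectors {φ(y)}_{y∈Y} are orthonormal, the ground truth reward r_G satisfies the reward structure assumption, and the initial parameters θ_0 satisfy the initial policy assumption (orthonormal case). Let r_P be identical to r_G except that r_P(y_med) = min_{y∈Y_bad} r_G(y), and let ε ∈ (0, Δ1). If θ_t is the gradient flow maximizing V_P, then for every t ≥ T := (r_G(y_⋆) + 1)² / (ε² (r_P(y_⋆) − V_P(θ_0))) · π_{θ_0}(y_⋆)^{−1}, it holds that V_G(θ_t) ≥ r_G(y_⋆) − ε and π_{θ_t}(y_⋆) ≥ 1 − ε/(Δ1 + Δ2). -/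

import Mathlib

open scoped BigOperators RealInnerProductSpace

noncomputable def policy {Y : Type*} [Fintype Y] {D : ℕ}
    (φ : Y → EuclideanSpace ℝ (Fin D)) (θ : EuclideanSpace ℝ (Fin D)) (y : Y) : ℝ :=
  Real.exp ⟪φ y, θ⟫ / ∑ z, Real.exp ⟪φ z, θ⟫

noncomputable def expReward {Y : Type*} [Fintype Y] {D : ℕ}
    (φ : Y → EuclideanSpace ℝ (Fin D)) (r : Y → ℝ) (θ : EuclideanSpace ℝ (Fin D)) : ℝ :=
  ∑ y, policy φ θ y * r y



noncomputable def invW {Y : Type*} [Fintype Y] {D : ℕ}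
    (φ : Y → EuclideanSpace ℝ (Fin D)) (y0 : Y) (θ : EuclideanSpace ℝ (Fin D)) : ℝ :=
  ∑ z, Real.exp ⟪φ z - φ y0, θ⟫

noncomputable def gradW {Y : Type*} [Fintype Y] {D : ℕ}
    (φ : Y → EuclideanSpace ℝ (Fin D)) (y0 : Y) (θ : EuclideanSpace ℝ (Fin D)) :
    EuclideanSpace ℝ (Fin D) :=
  ∑ z, Real.exp ⟪φ z - φ y0, θ⟫ • (φ z - φ y0)

section aux
variable {Y : Type*} [Fintype Y] {D : ℕ} (φ : Y → EuclideanSpace ℝ (Fin D)) (y0 : Y)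
  (θ : EuclideanSpace ℝ (Fin D))

lemma policy_eq_inv : policy φ θ y0 = (invW φ y0 θ)⁻¹ := by
  have h : invW φ y0 θ = (∑ z, Real.exp ⟪φ z, θ⟫) / Real.exp ⟪φ y0, θ⟫ := by
    unfold invW
    rw [Finset.sum_div]
    refine Finset.sum_congr rfl fun z _ => ?_
    rw [inner_sub_left, Real.exp_sub]
  rw [h, inv_div, policy]

lemma one_le_invW : 1 ≤ invW φ y0 θ := by
  have h := Finset.single_le_sum (f := fun z => Real.exp ⟪φ z - φ y0, θ⟫)
    (fun z _ => (Real.exp_pos _).le) (Finset.mem_univ y0)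
  simpa [invW] using h

lemma policy_nonneg (y : Y) : 0 ≤ policy φ θ y :=
  div_nonneg (Real.exp_pos _).le (Finset.sum_nonneg fun z _ => (Real.exp_pos _).le)

lemma policy_sum [Nonempty Y] : ∑ y, policy φ θ y = 1 := by
  unfold policy
  rw [← Finset.sum_div, div_self]
  exact (Finset.sum_pos (fun z _ => Real.exp_pos _) Finset.univ_nonempty).ne'

lemma invW_grad : HasGradientAt (invW φ y0) (gradW φ y0 θ) θ := by
  rw [hasGradientAt_iff_hasFDerivAt]
  have h : ∀ z ∈ (Finset.univ : Finset Y), HasFDerivAt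
      (fun θ : EuclideanSpace ℝ (Fin D) => Real.exp ⟪φ z - φ y0, θ⟫)
      (Real.exp ⟪φ z - φ y0, θ⟫ • innerSL ℝ (φ z - φ y0)) θ := by
    intro z _
    exact ((innerSL ℝ (φ z - φ y0)).hasFDerivAt (x := θ)).exp
  have h2 := HasFDerivAt.fun_sum h
  refine h2.congr_fderiv ?_
  ext v
  simp [gradW, sum_inner, inner_smul_left]

lemma inner_gradW (horth : Orthonormal ℝ φ) :
    ⟪φ y0, gradW φ y0 θ⟫ = 1 - invW φ y0 θ := by
  classical
  unfold gradW invW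
  simp only [inner_sum, inner_smul_right, inner_sub_right]
  have : ∀ z, ⟪φ y0, φ z⟫ = if y0 = z then (1:ℝ) else 0 := fun z =>
    (orthonormal_iff_ite.1 horth) y0 z
  simp only [this, if_true, mul_sub, mul_one, Finset.sum_sub_distrib, mul_ite, mul_zero]
  simp

lemma sq_le_gradW (horth : Orthonormal ℝ φ) :
    (invW φ y0 θ - 1) ^ 2 ≤ ⟪gradW φ y0 θ, gradW φ y0 θ⟫ := by
  have h := abs_real_inner_le_norm (φ y0) (gradW φ y0 θ)
  rw [inner_gradW φ y0 θ horth, horth.1 y0, one_mul] at h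
  rw [real_inner_self_eq_norm_sq, ← sq_abs, abs_sub_comm]
  gcongr

lemma expReward_lower [Nonempty Y] (r : Y → ℝ) (b : ℝ) (hb : ∀ y, b ≤ r y) :
    b + (r y0 - b) * policy φ θ y0 ≤ expReward φ r θ := by
  have h1 : expReward φ r θ = b + ∑ y, policy φ θ y * (r y - b) := by
    simp only [mul_sub, Finset.sum_sub_distrib, ← Finset.sum_mul, policy_sum, expReward]
    ring
  have h2 := Finset.single_le_sum (f := fun y => policy φ θ y * (r y - b))
    (fun z _ => mul_nonneg (policy_nonneg φ θ z) (sub_nonneg.2 (hb z))) (Finset.mem_univ y0)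
  rw [h1]; linarith

lemma expReward_eq [Nonempty Y] (r : Y → ℝ) (b : ℝ) (hb : ∀ y, y ≠ y0 → r y = b) :
    expReward φ r θ = b + (r y0 - b) * (invW φ y0 θ)⁻¹ := by
  have h1 : expReward φ r θ = b + ∑ y, policy φ θ y * (r y - b) := by
    simp only [mul_sub, Finset.sum_sub_distrib, ← Finset.sum_mul, policy_sum, expReward]
    ring
  rw [h1, Finset.sum_eq_single y0, policy_eq_inv]
  · ring
  · intro y _ hy
    rw [hb y hy]; ring
  · simp

lemma expReward_grad [Nonempty Y] (r : Y → ℝ) (b : ℝ) (hb : ∀ y, y ≠ y0 → r y = b) :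
    gradient (expReward φ r) θ
      = ((r y0 - b) * -((invW φ y0 θ) ^ 2)⁻¹) • gradW φ y0 θ := by
  have hW : invW φ y0 θ ≠ 0 := by
    intro h
    have := one_le_invW φ y0 θ
    linarith
  have e : expReward φ r = fun θ => b + (r y0 - b) * (invW φ y0 θ)⁻¹ :=
    funext fun θ => expReward_eq φ y0 θ r b hb
  apply HasGradientAt.gradient
  rw [hasGradientAt_iff_hasFDerivAt, e]
  have h := (invW_grad φ y0 θ)
  rw [hasGradientAt_iff_hasFDerivAt] at h
  have h2 := (((hasDerivAt_inv hW).comp_hasFDerivAt θ h).const_mul (r y0 - b)).const_add b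
  refine h2.congr_fderiv ?_
  rw [map_smul, smul_smul]

end aux

theorem fast_opt_orthonormal {Y : Type*} [Fintype Y] {D : ℕ}
    (φ : Y → EuclideanSpace ℝ (Fin D)) (hφ : ∀ y, φ y ≠ 0)
    (horth : Orthonormal ℝ φ)
    (rG : Y → ℝ) (hrG : ∀ y, rG y ∈ Set.Icc (-1 : ℝ) 1)
    (ystar ymed ybad : Y) (Ybad : Finset Y) (hybad : ybad ∈ Ybad)
    (hsm : ystar ≠ ymed) (hsb : ystar ∉ Ybad) (hmb : ymed ∉ Ybad)
    (hcover : ∀ y : Y, y = ystar ∨ y = ymed ∨ y ∈ Ybad)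
    (hr1 : rG ymed < rG ystar) (hr2 : 0 < rG ymed)
    (hr3 : ∀ y ∈ Ybad, rG y ≤ 0)
    (hr4 : ∀ y ∈ Ybad, rG y = rG ybad)
    (Δ1 Δ2 : ℝ) (hΔ1 : Δ1 = rG ystar - rG ymed) (hΔ2 : Δ2 = rG ymed - rG ybad)
    (rP : Y → ℝ) (hrP : ∀ y, rP y ∈ Set.Icc (-1 : ℝ) 1)
    (hrPeq : ∀ y : Y, y ≠ ymed → rP y = rG y)
    (hrPmed : rP ymed = Finset.inf' Ybad ⟨ybad, hybad⟩ rG)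
    (θt : ℝ → EuclideanSpace ℝ (Fin D))
    (hflow : ∀ t : ℝ, 0 ≤ t → HasDerivAt θt (gradient (expReward φ rP) (θt t)) t)
    (M : ℝ) (hM : M = min 1 (0.05 * rG ymed ^ ((2:ℝ)/7) / (Δ1 + Δ2)))
    (hinit1 : policy φ (θt 0) ystar
        < M * (min 0.01 (min ((21 / (1100 * (Δ1 + Δ2))) ^ ((7:ℝ)/3)) (Δ2 ^ 2))) ^ ((13:ℝ)/14))
    (hinit2 : max (2 * policy φ (θt 0) ystar ^ ((7:ℝ)/13) / (Δ2 * M ^ ((7:ℝ)/13)))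
        (0.05 * rG ymed) ≤ ∑ y ∈ Ybad, policy φ (θt 0) y)
    (hinit3 : ∑ y ∈ Ybad, policy φ (θt 0) y ≤ 0.1 * rG ymed)
    (ε : ℝ) (hε : ε ∈ Set.Ioo 0 Δ1) :
    ∀ t : ℝ,
      (rG ystar + 1) ^ 2 / (ε ^ 2 * (rP ystar - expReward φ rP (θt 0)))
          * (policy φ (θt 0) ystar)⁻¹ ≤ t →
        rG ystar - ε ≤ expReward φ rG (θt t)
          ∧ 1 - ε / (Δ1 + Δ2) ≤ policy φ (θt t) ystar := by
  have : Nonempty Y := ⟨ystar⟩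
  have hb : ∀ y, y ≠ ystar → rP y = rG ybad := by
    intro y hy
    have hinf : Finset.inf' Ybad ⟨ybad, hybad⟩ rG = rG ybad := by
      apply le_antisymm
      · exact Finset.inf'_le _ hybad
      · exact Finset.le_inf' _ _ fun z hz => (hr4 z hz).ge
    rcases hcover y with h | h | h
    · exact absurd h hy
    · rw [h, hrPmed, hinf]
    · rw [hrPeq y (fun h' => hmb (h' ▸ h)), hr4 y h]
  have hPs : rP ystar = rG ystar := hrPeq _ hsm
  have hb0 := hr3 ybad hybad
  have hb1 := (hrG ybad).1
  obtain ⟨hε0, hε1⟩ := hε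
  set Δ := Δ1 + Δ2 with hΔ
  have hΔe : rG ystar - rG ybad = Δ := by rw [hΔ, hΔ1, hΔ2]; ring
  have hΔpos : 0 < Δ := by linarith
  have hlow : ∀ y, rG ybad ≤ rG y := by
    intro y
    rcases hcover y with h | h | h
    · rw [h]; linarith
    · rw [h]; linarith
    · rw [hr4 y h]
  set w : ℝ → ℝ := fun t => invW φ ystar (θt t) with hw
  have hw1 : ∀ t, 1 ≤ w t := fun t => one_le_invW φ ystar (θt t)
  have hder : ∀ t, 0 ≤ t → ∃ w', HasDerivAt w w' t ∧ w' ≤ -(Δ * (1 - (w t)⁻¹) ^ 2) := by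
    intro t ht
    have h1 := hflow t ht
    have h2 := invW_grad φ ystar (θt t)
    rw [hasGradientAt_iff_hasFDerivAt] at h2
    refine ⟨_, h2.comp_hasDerivAt t h1, ?_⟩
    rw [expReward_grad φ ystar (θt t) rP (rG ybad) hb, hPs, hΔe]
    rw [InnerProductSpace.toDual_apply_apply, inner_smul_right]
    have h3 := sq_le_gradW φ ystar (θt t) horth
    have hwp : 0 < w t := by linarith [hw1 t]
    change Δ * -((w t) ^ 2)⁻¹ * _ ≤ _
    change (w t - 1) ^ 2 ≤ _ at h3
    have h4 : (1 - (w t)⁻¹) ^ 2 = ((w t) ^ 2)⁻¹ * (w t - 1) ^ 2 := by field_simp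
    rw [h4]
    have h5 : 0 ≤ Δ * ((w t) ^ 2)⁻¹ := by positivity
    nlinarith [mul_le_mul_of_nonneg_left h3 h5]
  have hcont : ContinuousOn w (Set.Ici 0) := fun t ht => by
    obtain ⟨w', h, -⟩ := hder t ht
    exact h.continuousAt.continuousWithinAt
  have hanti : AntitoneOn w (Set.Ici 0) := by
    apply antitoneOn_of_deriv_nonpos (convex_Ici 0) hcont
    · intro t ht
      rw [interior_Ici] at ht
      obtain ⟨w', h, -⟩ := hder t (le_of_lt ht)
      exact h.differentiableAt.differentiableWithinAt
    · intro t ht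
      rw [interior_Ici] at ht
      obtain ⟨w', h, h'⟩ := hder t (le_of_lt ht)
      rw [h.deriv]
      have : 0 ≤ Δ * (1 - (w t)⁻¹) ^ 2 := by positivity
      linarith
  intro t ht
  have hw0 : 1 < w 0 := by
    have h := Finset.sum_lt_sum_of_subset (f := fun z => Real.exp ⟪φ z - φ ystar, θt 0⟫)
      (Finset.subset_univ {ystar}) (Finset.mem_univ ymed) (by simpa using hsm.symm)
      (Real.exp_pos _) (fun j _ _ => (Real.exp_pos _).le)
    simpa [hw, invW] using h
  have key : 1 - ε / Δ ≤ policy φ (θt t) ystar := by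
    rw [policy_eq_inv, inv_inv, expReward_eq φ ystar (θt 0) rP (rG ybad) hb, hPs, hΔe] at ht
    rw [policy_eq_inv]
    change _ * w 0 ≤ t at ht
    change _ ≤ (w t)⁻¹
    have hden : rG ystar - (rG ybad + Δ * (invW φ ystar (θt 0))⁻¹) = Δ * (1 - (w 0)⁻¹) := by
      rw [← hΔe]; simp only [hw]; ring
    rw [hden] at ht
    have hi0 : 0 < (w 0)⁻¹ := by positivity
    have hi1 : 0 < 1 - (w 0)⁻¹ := by
      have := inv_lt_one_of_one_lt₀ hw0
      linarith
    have hT : Δ / ε ^ 2 * w 0 ≤ t := by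
      refine le_trans ?_ ht
      refine mul_le_mul_of_nonneg_right ?_ (by linarith)
      rw [div_le_div_iff₀ (by positivity) (by positivity)]
      have h1 : Δ ^ 2 * (1 - (w 0)⁻¹) ≤ (rG ystar + 1) ^ 2 := by
        have : Δ ^ 2 ≤ (rG ystar + 1) ^ 2 := by
          apply pow_le_pow_left₀ hΔpos.le; linarith
        nlinarith [sq_nonneg Δ]
      nlinarith [mul_le_mul_of_nonneg_right h1 (sq_nonneg ε)]
    have ht0 : 0 ≤ t := le_trans (by positivity) hT
    by_contra hcon
    push Not at hcon
    have hanti2 : AntitoneOn (fun s => w s + ε ^ 2 / Δ * s) (Set.Icc 0 t) := by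
      have hd : ∀ s ∈ Set.Icc 0 t, ∃ g', HasDerivAt (fun s => w s + ε ^ 2 / Δ * s) g' s
          ∧ g' ≤ 0 := by
        intro s hs
        obtain ⟨w', h, h'⟩ := hder s hs.1
        refine ⟨_, h.add ((hasDerivAt_id s).const_mul (ε ^ 2 / Δ)), ?_⟩
        have h1 : w t ≤ w s := hanti hs.1 ht0 hs.2
        have h2 : (w s)⁻¹ ≤ (w t)⁻¹ := inv_anti₀ (by linarith [hw1 t]) h1
        have h3 : (ε / Δ) ^ 2 ≤ (1 - (w s)⁻¹) ^ 2 :=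
          pow_le_pow_left₀ (by positivity) (by linarith) 2
        have h4 := mul_le_mul_of_nonneg_left h3 hΔpos.le
        have h5 : Δ * (ε / Δ) ^ 2 = ε ^ 2 / Δ := by field_simp
        rw [h5] at h4
        linarith
      apply antitoneOn_of_deriv_nonpos (convex_Icc 0 t)
      · intro s hs
        obtain ⟨g', h, -⟩ := hd s hs
        exact h.continuousAt.continuousWithinAt
      · intro s hs
        obtain ⟨g', h, -⟩ := hd s (interior_subset hs)
        exact h.differentiableAt.differentiableWithinAt
      · intro s hs
        obtain ⟨g', h, h'⟩ := hd s (interior_subset hs)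
        rw [h.deriv]; exact h'
    have hfin := hanti2 ⟨le_rfl, ht0⟩ ⟨ht0, le_rfl⟩ ht0
    simp only [mul_zero, add_zero] at hfin
    have h6 := mul_le_mul_of_nonneg_left hT (by positivity : 0 ≤ ε ^ 2 / Δ)
    have h7 : ε ^ 2 / Δ * (Δ / ε ^ 2 * w 0) = w 0 := by field_simp
    linarith [hw1 t]
  refine ⟨?_, key⟩
  have h1 := expReward_lower φ ystar (θt t) rG (rG ybad) hlow
  rw [hΔe] at h1
  have h2 := mul_le_mul_of_nonneg_left key hΔpos.le
  have h3 : Δ * (1 - ε / Δ) = Δ - ε := by field_simp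
  linarith
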